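/- Under Assumption A, the set R₁ = {𝐢 ∈ Σ : there exists 𝐣 ≠ 𝐢 with Π(𝐢) = Π(𝐣)} satisfies μ(R₁) = 0; that is, the natural projection Π is injective off a set of μ-measure zero. -/

import Mathlib

open MeasureTheory Filter Set Topology
open scoped ENNReal

noncomputable section

/-- One triangular affine map `S_i(x,y) = (c x + u_i, d_i x + b y + v_i)`. -/
def Smap {N : ℕ} (c b : ℝ) (u v d : Fin N → ℝ) (i : Fin N) (p : ℝ × ℝ) : ℝ × ℝ :=
  (c * p.1 + u i, d i * p.1 + b * p.2 + v i)

/-- Composition along a finite word: `Sword [i₁,…,iₙ] = S_{i₁} ∘ ⋯ ∘ S_{iₙ}`. -/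
def Sword {N : ℕ} (c b : ℝ) (u v d : Fin N → ℝ) : List (Fin N) → (ℝ × ℝ) → ℝ × ℝ
  | [] => id
  | i :: w => Smap c b u v d i ∘ Sword c b u v d w

/-- The closed unit square `[0,1]²`. -/
def unitSq : Set (ℝ × ℝ) := Set.Icc 0 1 ×ˢ Set.Icc 0 1

/-- The length-`n` prefix of an infinite word, as a list. -/
def prefixWord {N : ℕ} (i : ℕ → Fin N) (n : ℕ) : List (Fin N) :=
  List.ofFn (fun k : Fin n => i k)

/-- The transversality condition: there is `c₃ > 0` such that for every `n` and all
`𝐢, 𝐣` with different first symbols, the projection to the `x`-axis of the intersection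
of the two level-`n` cylinder parallelograms has diameter `< c₃ bⁿ`. -/
def Transversality (N : ℕ) (c b : ℝ) (u v d : Fin N → ℝ) : Prop :=
  ∃ c₃ > (0 : ℝ), ∀ (n : ℕ) (i j : ℕ → Fin N), i 0 ≠ j 0 →
    Metric.diam (Prod.fst '' (Sword c b u v d (prefixWord i n) '' unitSq ∩
      Sword c b u v d (prefixWord j n) '' unitSq)) < c₃ * b ^ n

/-- `μ` is the uniform Bernoulli measure `(1/N,…,1/N)^ℕ` on the symbolic space. -/
def IsUniformBernoulli (N : ℕ) (μ : Measure (ℕ → Fin N)) : Prop :=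
  IsProbabilityMeasure μ ∧ ∀ (n : ℕ) (w : Fin n → Fin N),
    μ {x | ∀ k : Fin n, x (k : ℕ) = w k} = (1 / (N : ℝ≥0∞)) ^ n

/-- `m` is absolutely continuous w.r.t. Lebesgue measure with an `L^q` density. -/
def HasLqDensity (m : Measure ℝ) (q : ℝ) : Prop :=
  ∃ φ : ℝ → ℝ≥0∞, m = MeasureTheory.volume.withDensity φ ∧ (∫⁻ t, φ t ^ q) < ⊤

/-- The Hausdorff dimension of a measure: the infimum of Hausdorff dimensions
of sets of full measure. -/
def measureDimH {X : Type*} [EMetricSpace X] [MeasurableSpace X] (m : Measure X) : ℝ≥0∞ :=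
  ⨅ (A : Set X) (_ : m Aᶜ = 0), dimH A

/-!
The projection `ν` of `μ` to the `x`-axis is absolutely continuous, so `ν`-almost every point has
a finite maximal function: off a set of small measure, `ν (B(x, r)) ≤ M * r` for all `r`. Consider
the sequences in a level-`n` cylinder `[a]` that collide with a sequence in a cylinder `[w]` with
another first letter. Since the cylinders project into intervals of length `c ^ n`, linear growth
at a collision point allows at most `2 * M * (c * N) ^ n` such words `w`. By transversality each
of these collisions takes place over an interval of length `C * b ^ n`; rescaled by `c ^ (-n)` it
lies in a ball of radius `C * (b / c) ^ n` around a point of linear growth, so it carries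
`μ`-measure at most `N ^ (-n) * M * C * (b / c) ^ n`. Summing over `w` and over the `N ^ n` words
`a` gives `2 * M ^ 2 * C * (N * b) ^ n → 0`. Any two sequences with the same image reduce to this
case by shifting to the first place where they differ.
-/

open scoped NNReal
open SymbolicDynamics.FullShift (shift shift_apply shift_add)

section Words

variable {α : Type*}

/-- The first `n` letters of a sequence, as an element of the type `Fin n → α` of words of length
`n`; the fibres of this map are the cylinders of level `n`. -/
def initialWord (n : ℕ) (x : ℕ → α) : Fin n → α := fun k => x k

lemma prefixWord_congr {N n : ℕ} {x y : ℕ → Fin N} (h : initialWord n x = initialWord n y) :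
    prefixWord x n = prefixWord y n :=
  congrArg List.ofFn h

lemma prefixWord_succ {N : ℕ} (x : ℕ → Fin N) (n : ℕ) :
    prefixWord x (n + 1) = x 0 :: prefixWord (shift 1 x) n := by
  simp [prefixWord, List.ofFn_succ, shift_apply, add_comm]

lemma initialWord_add (m n : ℕ) (x : ℕ → α) :
    initialWord (m + n) x = Fin.append (initialWord m x) (initialWord n (shift m x)) :=
  (Fin.append_castAdd_natAdd (f := initialWord (m + n) x)).symm

lemma preimage_initialWord_append {m n : ℕ} (a : Fin m → α) (w : Fin n → α) :
    initialWord (m + n) ⁻¹' {Fin.append a w} =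
      initialWord m ⁻¹' {a} ∩ shift m ⁻¹' (initialWord n ⁻¹' {w}) := by
  ext x
  simp only [mem_preimage, mem_singleton_iff, mem_inter_iff, initialWord_add]
  exact ((Fin.appendEquiv m n).apply_eq_iff_eq (x := (initialWord m x, initialWord n (shift m x)))
    (y := (a, w))).trans Prod.mk_inj

lemma piNat_cylinder_eq_preimage_initialWord (x : ℕ → α) (n : ℕ) :
    PiNat.cylinder x n = initialWord n ⁻¹' {initialWord n x} := by
  ext y
  simp [PiNat.cylinder, initialWord, funext_iff, Fin.forall_iff]

variable [MeasurableSpace α]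

lemma measurable_initialWord (n : ℕ) : Measurable (initialWord (α := α) n) :=
  measurable_pi_lambda _ fun k => measurable_pi_apply (k : ℕ)

lemma measurable_shift (n : ℕ) : Measurable (shift (A := α) n) :=
  measurable_pi_lambda _ fun k => measurable_pi_apply (n + k)

end Words

section Cylinders

variable {E : ℕ → Type*}

lemma isPiSystem_piNat_cylinder :
    IsPiSystem {s : Set (∀ n, E n) | ∃ x n, s = PiNat.cylinder x n} := by
  rintro _ ⟨x, m, rfl⟩ _ ⟨y, n, rfl⟩ ⟨z, hzx, hzy⟩
  rw [← PiNat.mem_cylinder_iff_eq.1 hzx, ← PiNat.mem_cylinder_iff_eq.1 hzy]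
  rcases le_total m n with h | h
  · exact ⟨z, n, inter_eq_right.2 (PiNat.cylinder_anti z h)⟩
  · exact ⟨z, m, inter_eq_left.2 (PiNat.cylinder_anti z h)⟩

lemma measure_ext_of_piNat_cylinder [∀ n, TopologicalSpace (E n)] [∀ n, DiscreteTopology (E n)]
    [∀ n, Countable (E n)] [∀ n, MeasurableSpace (E n)] [∀ n, BorelSpace (E n)]
    {μ ρ : Measure (∀ n, E n)} [IsFiniteMeasure μ]
    (h : ∀ x n, μ (PiNat.cylinder x n) = ρ (PiNat.cylinder x n)) : μ = ρ := by
  cases isEmpty_or_nonempty (∀ n, E n) with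
  | inl _ => exact Measure.eq_zero_of_isEmpty μ |>.trans (Measure.eq_zero_of_isEmpty ρ).symm
  | inr hne =>
    obtain ⟨x⟩ := hne
    refine ext_of_generate_finite _ (BorelSpace.measurable_eq.trans
      (PiNat.isTopologicalBasis_cylinders E).borel_eq_generateFrom) isPiSystem_piNat_cylinder ?_ ?_
    · rintro _ ⟨y, n, rfl⟩
      exact h y n
    · simpa only [PiNat.cylinder_zero] using h x 0

end Cylinders

namespace IsUniformBernoulli

variable {N : ℕ} {μ : Measure (ℕ → Fin N)}

lemma measure_preimage_initialWord_singleton (hμ : IsUniformBernoulli N μ) {n : ℕ}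
    (w : Fin n → Fin N) : μ (initialWord n ⁻¹' {w}) = (1 / (N : ℝ≥0∞)) ^ n := by
  simpa only [initialWord, preimage, mem_singleton_iff, funext_iff] using hμ.2 n w

lemma measure_preimage_initialWord (hμ : IsUniformBernoulli N μ) {n : ℕ}
    (s : Finset (Fin n → Fin N)) :
    μ (initialWord n ⁻¹' s) = s.card * (1 / (N : ℝ≥0∞)) ^ n := by
  rw [← sum_measure_preimage_singleton s fun w _ =>
    measurable_initialWord n (measurableSet_singleton w)]
  simp only [hμ.measure_preimage_initialWord_singleton, Finset.sum_const, nsmul_eq_mul]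

lemma map_shift_restrict (hμ : IsUniformBernoulli N μ) {n : ℕ} (w : Fin n → Fin N) :
    (μ.restrict (initialWord n ⁻¹' {w})).map (shift n) = (1 / (N : ℝ≥0∞)) ^ n • μ := by
  have := hμ.1
  refine measure_ext_of_piNat_cylinder fun x m => ?_
  have hcyl : MeasurableSet (initialWord m ⁻¹' {initialWord m x}) :=
    measurable_initialWord m (measurableSet_singleton _)
  rw [piNat_cylinder_eq_preimage_initialWord, Measure.map_apply (measurable_shift n) hcyl,
    Measure.restrict_apply (measurable_shift n hcyl), inter_comm, ← preimage_initialWord_append,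
    Measure.smul_apply, smul_eq_mul, hμ.measure_preimage_initialWord_singleton,
    hμ.measure_preimage_initialWord_singleton, pow_add]

lemma measure_inter_preimage_shift (hμ : IsUniformBernoulli N μ) {n : ℕ} (w : Fin n → Fin N)
    {A : Set (ℕ → Fin N)} (hA : MeasurableSet A) :
    μ (initialWord n ⁻¹' {w} ∩ shift n ⁻¹' A) = (1 / (N : ℝ≥0∞)) ^ n * μ A := by
  rw [inter_comm, ← Measure.restrict_apply (measurable_shift n hA),
    ← Measure.map_apply (measurable_shift n) hA, hμ.map_shift_restrict, Measure.smul_apply,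
    smul_eq_mul]

lemma natCast_pow_mul_one_div_pow (hμ : IsUniformBernoulli N μ) (n : ℕ) :
    (N : ℝ≥0∞) ^ n * (1 / (N : ℝ≥0∞)) ^ n = 1 := by
  have := hμ.1
  simpa using (hμ.measure_preimage_initialWord (n := n) Finset.univ).symm

lemma measurePreserving_shift (hμ : IsUniformBernoulli N μ) (n : ℕ) :
    MeasurePreserving (shift n) μ μ := by
  refine ⟨measurable_shift n, Measure.ext fun A hA => ?_⟩
  calc μ.map (shift n) A
      = μ.restrict (shift n ⁻¹' A) (initialWord n ⁻¹' (Finset.univ : Finset (Fin n → Fin N))) := by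
        rw [Measure.map_apply (measurable_shift n) hA, Finset.coe_univ, preimage_univ,
          Measure.restrict_apply_univ]
    _ = ∑ w : Fin n → Fin N, μ (initialWord n ⁻¹' {w} ∩ shift n ⁻¹' A) := by
        have hcyl (w : Fin n → Fin N) : MeasurableSet (initialWord n ⁻¹' {w}) :=
          measurable_initialWord n (measurableSet_singleton w)
        rw [← sum_measure_preimage_singleton _ fun w _ => hcyl w]
        exact Finset.sum_congr rfl fun w _ => Measure.restrict_apply (hcyl w)
    _ = (N : ℝ≥0∞) ^ n * (1 / (N : ℝ≥0∞)) ^ n * μ A := by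
        simp only [hμ.measure_inter_preimage_shift _ hA, Finset.sum_const, Finset.card_univ,
          Fintype.card_fun, Fintype.card_fin, nsmul_eq_mul, Nat.cast_pow, mul_assoc]
    _ = μ A := by rw [hμ.natCast_pow_mul_one_div_pow, one_mul]

end IsUniformBernoulli

section LinearGrowth

variable {X : Type*} [PseudoMetricSpace X] [MeasurableSpace X]

/-- The sublevel set at height `M` of the one-dimensional maximal function
`x ↦ sup_r ν (B(x, r)) / r` of `ν`. -/
def linearGrowthSet (ν : Measure X) (M : ℝ≥0) : Set X :=
  {x | ∀ r > 0, ν (Metric.closedBall x r) ≤ M * ENNReal.ofReal r}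

lemma monotone_linearGrowthSet (ν : Measure X) : Monotone (linearGrowthSet ν) :=
  fun _ _ hM _ hx r hr => (hx r hr).trans <| by gcongr

lemma isClosed_linearGrowthSet (ν : Measure X) (M : ℝ≥0) : IsClosed (linearGrowthSet ν M) := by
  refine isClosed_of_closure_subset fun x hx r hr => ?_
  have hlim : Tendsto (fun ε : ℝ => M * ENNReal.ofReal (r + ε)) (𝓝[>] 0)
      (𝓝 (M * ENNReal.ofReal r)) := by
    refine ENNReal.Tendsto.const_mul (ENNReal.tendsto_ofReal ?_) (Or.inr ENNReal.coe_ne_top)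
    exact tendsto_nhdsWithin_of_tendsto_nhds <| by
      simpa using (continuous_const_add r).tendsto (0 : ℝ)
  refine ge_of_tendsto hlim (eventually_mem_nhdsWithin.mono fun ε (hε : 0 < ε) => ?_)
  obtain ⟨y, hy, hxy⟩ := Metric.mem_closure_iff.1 hx ε hε
  exact (measure_mono (Metric.closedBall_subset_closedBall' (by gcongr))).trans
    (hy (r + ε) (by positivity))

lemma ae_exists_mem_linearGrowthSet {ν : Measure ℝ} [IsFiniteMeasure ν] (hν : ν ≪ volume) :
    ∀ᵐ x ∂ν, ∃ M, x ∈ linearGrowthSet ν M := by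
  filter_upwards [hν.ae_le (Besicovitch.ae_tendsto_rnDeriv ν volume),
    hν.ae_le (Measure.rnDeriv_lt_top ν volume)] with x hlim hfin
  set D := ν.rnDeriv volume x
  obtain ⟨δ, hδ, hsmall⟩ := mem_nhdsGT_iff_exists_Ioo_subset.1
    (hlim.eventually_lt_const (ENNReal.lt_add_right hfin.ne one_ne_zero))
  have hδ' : ENNReal.ofReal δ ≠ 0 := (ENNReal.ofReal_pos.2 hδ).ne'
  have hfinite : (D + 1) * 2 + ν univ / ENNReal.ofReal δ ≠ ⊤ :=
    ENNReal.add_ne_top.2 ⟨ENNReal.mul_ne_top (by simp [hfin.ne]) (by simp),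
      ENNReal.div_ne_top (measure_ne_top ν _) hδ'⟩
  refine ⟨((D + 1) * 2 + ν univ / ENNReal.ofReal δ).toNNReal, fun r hr => ?_⟩
  rw [ENNReal.coe_toNNReal hfinite]
  rcases lt_or_ge r δ with hrδ | hδr
  · have hratio : ν (Metric.closedBall x r) / volume (Metric.closedBall x r) ≤ D + 1 :=
      le_of_lt (hsmall ⟨hr, hrδ⟩)
    rw [ENNReal.div_le_iff (by simpa using hr) measure_closedBall_lt_top.ne, Real.volume_closedBall,
      ENNReal.ofReal_mul zero_le_two, ENNReal.ofReal_ofNat, ← mul_assoc] at hratio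
    exact hratio.trans (by gcongr; exact le_self_add)
  · calc ν (Metric.closedBall x r) ≤ ν univ := measure_mono (subset_univ _)
      _ = ν univ / ENNReal.ofReal δ * ENNReal.ofReal δ :=
        (ENNReal.div_mul_cancel hδ' ENNReal.ofReal_ne_top).symm
      _ ≤ _ := by gcongr; exact le_add_self

lemma tendsto_measure_compl_linearGrowthSet {ν : Measure ℝ} [IsFiniteMeasure ν]
    (hν : ν ≪ volume) : Tendsto (fun M => ν (linearGrowthSet ν M)ᶜ) atTop (𝓝 0) := by
  have hnull : ν (⋂ M, (linearGrowthSet ν M)ᶜ) = 0 := by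
    rw [← compl_iUnion]
    exact mem_ae_iff.1 ((ae_exists_mem_linearGrowthSet hν).mono fun _ hx => mem_iUnion.2 hx)
  rw [← hnull]
  exact tendsto_measure_iInter_atTop
    (fun M => (isClosed_linearGrowthSet ν M).measurableSet.compl.nullMeasurableSet)
    (fun _ _ hM => compl_subset_compl.2 (monotone_linearGrowthSet ν hM)) ⟨0, measure_ne_top _ _⟩

end LinearGrowth

section Projection

variable {N : ℕ} {c b : ℝ} {u v d : Fin N → ℝ}

lemma continuous_Smap (i : Fin N) : Continuous (Smap c b u v d i) := by
  unfold Smap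
  fun_prop

lemma continuous_Sword (w : List (Fin N)) : Continuous (Sword c b u v d w) := by
  induction w with
  | nil => exact continuous_id
  | cons i w ih => exact (continuous_Smap i).comp ih

lemma injective_Smap (hc : c ≠ 0) (hb : b ≠ 0) (i : Fin N) :
    Function.Injective (Smap c b u v d i) := by
  rintro ⟨x, y⟩ ⟨x', y'⟩ h
  obtain ⟨hfst, hsnd⟩ := Prod.mk_inj.1 h
  obtain rfl : x = x' := mul_left_cancel₀ hc (add_right_cancel hfst)
  obtain rfl : y = y' := mul_left_cancel₀ hb (add_left_cancel (add_right_cancel hsnd))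
  rfl

lemma injective_Sword (hc : c ≠ 0) (hb : b ≠ 0) (w : List (Fin N)) :
    Function.Injective (Sword c b u v d w) := by
  induction w with
  | nil => exact Function.injective_id
  | cons i w ih => exact (injective_Smap hc hb i).comp ih

lemma Sword_fst_sub_fst (w : List (Fin N)) (p q : ℝ × ℝ) :
    (Sword c b u v d w p).1 - (Sword c b u v d w q).1 = c ^ w.length * (p.1 - q.1) := by
  induction w with
  | nil => simp [Sword]
  | cons i w ih =>
    simp only [Sword, Function.comp_apply, Smap, List.length_cons, pow_succ]
    linear_combination c * ih

lemma mapsTo_Sword_unitSq (hmaps : ∀ i, Smap c b u v d i '' unitSq ⊆ unitSq) (w : List (Fin N)) :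
    MapsTo (Sword c b u v d w) unitSq unitSq := by
  induction w with
  | nil => exact mapsTo_id _
  | cons i w ih => exact (mapsTo_iff_image_subset.2 (hmaps i)).comp ih

lemma isCompact_unitSq : IsCompact unitSq := isCompact_Icc.prod isCompact_Icc

lemma zero_mem_unitSq : (0 : ℝ × ℝ) ∈ unitSq :=
  ⟨⟨le_rfl, zero_le_one⟩, ⟨le_rfl, zero_le_one⟩⟩

/-- `P` is the natural projection (coding map) of the iterated function system `Smap c b u v d`. -/
def IsNaturalProjection (c b : ℝ) (u v d : Fin N → ℝ) (P : (ℕ → Fin N) → ℝ × ℝ) : Prop :=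
  ∀ i, Tendsto (fun n => Sword c b u v d (prefixWord i n) 0) atTop (𝓝 (P i))

namespace IsNaturalProjection

variable {P : (ℕ → Fin N) → ℝ × ℝ}

lemma mem_unitSq (hP : IsNaturalProjection c b u v d P)
    (hmaps : ∀ i, Smap c b u v d i '' unitSq ⊆ unitSq) (i : ℕ → Fin N) : P i ∈ unitSq :=
  isCompact_unitSq.isClosed.mem_of_tendsto (hP i)
    (Eventually.of_forall fun _ => mapsTo_Sword_unitSq hmaps _ zero_mem_unitSq)

lemma eq_Smap (hP : IsNaturalProjection c b u v d P) (i : ℕ → Fin N) :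
    P i = Smap c b u v d (i 0) (P (shift 1 i)) := by
  have hlim : Tendsto (Smap c b u v d (i 0) ∘ fun n => Sword c b u v d (prefixWord (shift 1 i) n) 0)
      atTop (𝓝 (Smap c b u v d (i 0) (P (shift 1 i)))) :=
    ((continuous_Smap (i 0)).tendsto _).comp (hP (shift 1 i))
  refine tendsto_nhds_unique ((tendsto_add_atTop_iff_nat 1).2 (hP i)) (hlim.congr fun n => ?_)
  rw [prefixWord_succ]
  rfl

lemma eq_Sword (hP : IsNaturalProjection c b u v d P) (n : ℕ) (i : ℕ → Fin N) :
    P i = Sword c b u v d (prefixWord i n) (P (shift n i)) := by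
  induction n generalizing i with
  | zero => exact congrArg P (funext fun k => by simp)
  | succ n ih =>
    rw [prefixWord_succ, add_comm, shift_add, hP.eq_Smap i, ih (shift 1 i)]
    rfl

lemma measurable (hP : IsNaturalProjection c b u v d P) : Measurable P := by
  refine measurable_of_tendsto_metrizable (fun n => ?_) (tendsto_pi_nhds.2 hP)
  exact (measurable_of_finite fun w => Sword c b u v d (List.ofFn w) 0).comp
    (measurable_initialWord n)

lemma dist_fst (hP : IsNaturalProjection c b u v d P) {n : ℕ} {i j : ℕ → Fin N}
    (hij : initialWord n i = initialWord n j) :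
    dist (P i).1 (P j).1 = |c| ^ n * dist (P (shift n i)).1 (P (shift n j)).1 := by
  rw [hP.eq_Sword n i, hP.eq_Sword n j, prefixWord_congr hij, Real.dist_eq, Sword_fst_sub_fst,
    prefixWord, List.length_ofFn, abs_mul, abs_pow, Real.dist_eq]

lemma dist_fst_le (hP : IsNaturalProjection c b u v d P)
    (hmaps : ∀ i, Smap c b u v d i '' unitSq ⊆ unitSq) {n : ℕ} {i j : ℕ → Fin N}
    (hij : initialWord n i = initialWord n j) : dist (P i).1 (P j).1 ≤ |c| ^ n := by
  rw [hP.dist_fst hij]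
  exact mul_le_of_le_one_right (by positivity)
    (Real.dist_le_of_mem_Icc_01 (hP.mem_unitSq hmaps _).1 (hP.mem_unitSq hmaps _).1)

lemma mem_image_Sword (hP : IsNaturalProjection c b u v d P)
    (hmaps : ∀ i, Smap c b u v d i '' unitSq ⊆ unitSq) (n : ℕ) (i : ℕ → Fin N) :
    P i ∈ Sword c b u v d (prefixWord i n) '' unitSq :=
  ⟨P (shift n i), hP.mem_unitSq hmaps _, (hP.eq_Sword n i).symm⟩

end IsNaturalProjection

end Projection

section Collisions

variable {α X : Type*}

/-- The sequences whose image under `f` is also the image of a sequence with another first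
letter. -/
def collisionSet (f : (ℕ → α) → X) : Set (ℕ → α) := {i | ∃ j, j 0 ≠ i 0 ∧ f j = f i}

/-- The part of `collisionSet f` where the sequence starts with `a` and the colliding sequence
starts with `w`. -/
def collisionBlock (f : (ℕ → α) → X) {n : ℕ} (a w : Fin n → α) : Set (ℕ → α) :=
  {i | initialWord n i = a ∧ ∃ j, initialWord n j = w ∧ j 0 ≠ i 0 ∧ f j = f i}

lemma collisionSet_eq_iUnion_collisionBlock (f : (ℕ → α) → X) (n : ℕ) :
    collisionSet f = ⋃ (a : Fin n → α) (w : Fin n → α), collisionBlock f a w := by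
  ext i
  simp [collisionSet, collisionBlock]

variable {N : ℕ} {c b : ℝ} {u v d : Fin N → ℝ} {P : (ℕ → Fin N) → ℝ × ℝ}

lemma IsNaturalProjection.setOf_not_injective_subset (hP : IsNaturalProjection c b u v d P)
    (hc : c ≠ 0) (hb : b ≠ 0) :
    {i | ∃ j, j ≠ i ∧ P j = P i} ⊆ ⋃ k, shift k ⁻¹' collisionSet P := by
  rintro i ⟨j, hji, hPji⟩
  set k := PiNat.firstDiff j i
  have hprefix : prefixWord j k = prefixWord i k :=
    prefixWord_congr (funext fun l => PiNat.apply_eq_of_lt_firstDiff l.2)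
  rw [hP.eq_Sword k j, hP.eq_Sword k i, hprefix] at hPji
  exact mem_iUnion.2 ⟨k, shift k j, PiNat.apply_firstDiff_ne hji, injective_Sword hc hb _ hPji⟩

lemma IsNaturalProjection.exists_dist_fst_le_of_mem_collisionBlock
    (hP : IsNaturalProjection c b u v d P) (hmaps : ∀ i, Smap c b u v d i '' unitSq ⊆ unitSq)
    (htrans : Transversality N c b u v d) :
    ∃ C > 0, ∀ (n : ℕ) (a w : Fin n → Fin N), ∀ i ∈ collisionBlock P a w,
      ∀ i' ∈ collisionBlock P a w, dist (P i).1 (P i').1 ≤ C * b ^ n := by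
  obtain ⟨C, hC, hdiam⟩ := htrans
  refine ⟨C, hC, ?_⟩
  rintro n a w i ⟨hi, j, hj, hji, hPj⟩ i' ⟨hi', j', hj', -, hPj'⟩
  set K := Sword c b u v d (prefixWord i n) '' unitSq ∩ Sword c b u v d (prefixWord j n) '' unitSq
  have hmem : P i ∈ K :=
    ⟨hP.mem_image_Sword hmaps n i, hPj ▸ hP.mem_image_Sword hmaps n j⟩
  have hmem' : P i' ∈ K := by
    refine ⟨?_, ?_⟩
    · rw [prefixWord_congr (hi.trans hi'.symm)]
      exact hP.mem_image_Sword hmaps n i'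
    · rw [prefixWord_congr (hj.trans hj'.symm), ← hPj']
      exact hP.mem_image_Sword hmaps n j'
  have hbdd : Bornology.IsBounded (Prod.fst '' K) :=
    ((isCompact_unitSq.image (continuous_Sword _)).image continuous_fst).isBounded.subset
      (image_mono inter_subset_left)
  exact (Metric.dist_le_diam_of_mem hbdd (mem_image_of_mem _ hmem)
    (mem_image_of_mem _ hmem')).trans (hdiam n i j hji.symm).le

variable {μ : Measure (ℕ → Fin N)} {ν : Measure ℝ} {n : ℕ}

lemma measure_collisionBlock_inter_le (hμ : IsUniformBernoulli N μ)
    (hP : IsNaturalProjection c b u v d P) (hc : 0 < c)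
    (hν : MeasurePreserving (fun i => (P i).1) μ ν) {δ : ℝ} (hδ : 0 < δ) {a w : Fin n → Fin N}
    (hdist : ∀ i ∈ collisionBlock P a w, ∀ i' ∈ collisionBlock P a w,
      dist (P i).1 (P i').1 ≤ δ) (M : ℝ≥0) :
    μ (collisionBlock P a w ∩ {i | (P (shift n i)).1 ∈ linearGrowthSet ν M}) ≤
      (1 / (N : ℝ≥0∞)) ^ n * (M * ENNReal.ofReal (δ / c ^ n)) := by
  rcases (collisionBlock P a w ∩ {i | (P (shift n i)).1 ∈ linearGrowthSet ν M}).eq_empty_or_nonempty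
    with hempty | ⟨i₀, hi₀, hgrowth⟩
  · simp [hempty]
  set B := Metric.closedBall (P (shift n i₀)).1 (δ / c ^ n)
  have hB : MeasurableSet B := Metric.isClosed_closedBall.measurableSet
  have hsub : collisionBlock P a w ⊆
      initialWord n ⁻¹' {a} ∩ shift n ⁻¹' ((fun i => (P i).1) ⁻¹' B) := by
    intro i hi
    refine ⟨hi.1, Metric.mem_closedBall.2 ?_⟩
    rw [le_div_iff₀' (by positivity), ← abs_of_pos hc, ← hP.dist_fst (hi.1.trans hi₀.1.symm)]
    exact hdist i hi i₀ hi₀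
  calc _ ≤ μ (initialWord n ⁻¹' {a} ∩ shift n ⁻¹' ((fun i => (P i).1) ⁻¹' B)) :=
        measure_mono (inter_subset_left.trans hsub)
    _ = (1 / (N : ℝ≥0∞)) ^ n * ν B := by
        rw [hμ.measure_inter_preimage_shift a (hν.measurable hB),
          hν.measure_preimage hB.nullMeasurableSet]
    _ ≤ _ := by gcongr; exact hgrowth _ (by positivity)

lemma card_collisionBlock_nonempty_mul_le (hμ : IsUniformBernoulli N μ)
    (hP : IsNaturalProjection c b u v d P) (hmaps : ∀ i, Smap c b u v d i '' unitSq ⊆ unitSq)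
    (hc : 0 < c) (hν : MeasurePreserving (fun i => (P i).1) μ ν) {a : Fin n → Fin N} {M : ℝ≥0}
    {s : Finset (Fin n → Fin N)}
    (hs : ∀ w ∈ s, (collisionBlock P a w ∩ {i | (P i).1 ∈ linearGrowthSet ν M}).Nonempty) :
    s.card * (1 / (N : ℝ≥0∞)) ^ n ≤ M * ENNReal.ofReal (2 * c ^ n) := by
  rcases s.eq_empty_or_nonempty with rfl | ⟨w₀, hw₀⟩
  · simp
  obtain ⟨i₀, hi₀, hgrowth⟩ := hs w₀ hw₀
  set B := Metric.closedBall (P i₀).1 (2 * c ^ n)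
  have hsub : initialWord n ⁻¹' (s : Set (Fin n → Fin N)) ⊆ (fun i => (P i).1) ⁻¹' B := by
    intro x hx
    obtain ⟨i, ⟨hi, j, hj, -, hPj⟩, -⟩ := hs _ hx
    have hxj := hP.dist_fst_le hmaps hj.symm
    have hii₀ := hP.dist_fst_le hmaps (hi.trans hi₀.1.symm)
    rw [abs_of_pos hc] at hxj hii₀
    rw [hPj] at hxj
    exact Metric.mem_closedBall.2 (by linarith [dist_triangle (P x).1 (P i).1 (P i₀).1])
  calc s.card * (1 / (N : ℝ≥0∞)) ^ n = μ (initialWord n ⁻¹' s) :=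
        (hμ.measure_preimage_initialWord s).symm
    _ ≤ μ ((fun i => (P i).1) ⁻¹' B) := measure_mono hsub
    _ = ν B := hν.measure_preimage Metric.isClosed_closedBall.measurableSet.nullMeasurableSet
    _ ≤ _ := hgrowth _ (by positivity)

/-- The sequences whose projection and whose `n`-shifted projection both lie where `ν` has linear
growth with constant `M`. -/
def goodSet (P : (ℕ → Fin N) → ℝ × ℝ) (ν : Measure ℝ) (M : ℝ≥0) (n : ℕ) : Set (ℕ → Fin N) :=
  {i | (P i).1 ∈ linearGrowthSet ν M} ∩ {i | (P (shift n i)).1 ∈ linearGrowthSet ν M}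

lemma measure_compl_goodSet_le (hμ : IsUniformBernoulli N μ)
    (hν : MeasurePreserving (fun i => (P i).1) μ ν) (M : ℝ≥0) (n : ℕ) :
    μ (goodSet P ν M n)ᶜ ≤ 2 * ν (linearGrowthSet ν M)ᶜ := by
  have hmeas := (isClosed_linearGrowthSet ν M).measurableSet.compl.nullMeasurableSet (μ := ν)
  have hfirst := hν.measure_preimage hmeas
  have hshifted := (hν.comp (hμ.measurePreserving_shift n)).measure_preimage hmeas
  calc μ (goodSet P ν M n)ᶜ
      ≤ μ {i | (P i).1 ∈ linearGrowthSet ν M}ᶜ +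
          μ {i | (P (shift n i)).1 ∈ linearGrowthSet ν M}ᶜ := by
        rw [goodSet, compl_inter]
        exact measure_union_le _ _
    _ = 2 * ν (linearGrowthSet ν M)ᶜ := by
        rw [two_mul]
        exact congrArg₂ (· + ·) hfirst hshifted

lemma sum_measure_collisionBlock_inter_goodSet_le (hμ : IsUniformBernoulli N μ)
    (hP : IsNaturalProjection c b u v d P) (hmaps : ∀ i, Smap c b u v d i '' unitSq ⊆ unitSq)
    (hc : 0 < c) (hν : MeasurePreserving (fun i => (P i).1) μ ν) {δ : ℝ} (hδ : 0 < δ)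
    {a : Fin n → Fin N}
    (hdist : ∀ w : Fin n → Fin N, ∀ i ∈ collisionBlock P a w, ∀ i' ∈ collisionBlock P a w,
      dist (P i).1 (P i').1 ≤ δ) (M : ℝ≥0) :
    ∑ w, μ (collisionBlock P a w ∩ goodSet P ν M n) ≤ M ^ 2 * ENNReal.ofReal (2 * δ) := by
  classical
  set s : Finset (Fin n → Fin N) := {w | (collisionBlock P a w ∩ goodSet P ν M n).Nonempty}
  have hs : ∀ w ∈ s, (collisionBlock P a w ∩ {i | (P i).1 ∈ linearGrowthSet ν M}).Nonempty :=
    fun w hw => (Finset.mem_filter.1 hw).2.mono (inter_subset_inter_right _ inter_subset_left)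
  calc ∑ w, μ (collisionBlock P a w ∩ goodSet P ν M n)
      = ∑ w ∈ s, μ (collisionBlock P a w ∩ goodSet P ν M n) := by
        refine (Finset.sum_subset (Finset.subset_univ s) fun w _ hw => ?_).symm
        have hempty : collisionBlock P a w ∩ goodSet P ν M n = ∅ :=
          not_nonempty_iff_eq_empty.1 fun h => hw (by simpa [s] using h)
        rw [hempty, measure_empty]
    _ ≤ ∑ w ∈ s, (1 / (N : ℝ≥0∞)) ^ n * (M * ENNReal.ofReal (δ / c ^ n)) :=
        Finset.sum_le_sum fun w _ =>
          (measure_mono (inter_subset_inter_right _ inter_subset_right)).trans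
            (measure_collisionBlock_inter_le hμ hP hc hν hδ (hdist w) M)
    _ = s.card * (1 / (N : ℝ≥0∞)) ^ n * (M * ENNReal.ofReal (δ / c ^ n)) := by
        rw [Finset.sum_const, nsmul_eq_mul, mul_assoc]
    _ ≤ M * ENNReal.ofReal (2 * c ^ n) * (M * ENNReal.ofReal (δ / c ^ n)) := by
        gcongr ?_ * _
        exact card_collisionBlock_nonempty_mul_le hμ hP hmaps hc hν hs
    _ = M ^ 2 * ENNReal.ofReal (2 * δ) := by
        rw [mul_mul_mul_comm, ← sq, ← ENNReal.ofReal_mul (by positivity)]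
        congr 2
        field_simp

lemma measure_collisionSet_le (hμ : IsUniformBernoulli N μ)
    (hP : IsNaturalProjection c b u v d P) (hmaps : ∀ i, Smap c b u v d i '' unitSq ⊆ unitSq)
    (hc : 0 < c) (hν : MeasurePreserving (fun i => (P i).1) μ ν) {δ : ℝ} (hδ : 0 < δ)
    (hdist : ∀ a w : Fin n → Fin N, ∀ i ∈ collisionBlock P a w, ∀ i' ∈ collisionBlock P a w,
      dist (P i).1 (P i').1 ≤ δ) (M : ℝ≥0) :
    μ (collisionSet P) ≤
      N ^ n * (M ^ 2 * ENNReal.ofReal (2 * δ)) + 2 * ν (linearGrowthSet ν M)ᶜ := by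
  have hgood : μ (collisionSet P ∩ goodSet P ν M n) ≤ N ^ n * (M ^ 2 * ENNReal.ofReal (2 * δ)) := by
    calc μ (collisionSet P ∩ goodSet P ν M n)
        = μ (⋃ (a : Fin n → Fin N) (w : Fin n → Fin N),
            collisionBlock P a w ∩ goodSet P ν M n) := by
          simp only [collisionSet_eq_iUnion_collisionBlock P n, iUnion_inter]
      _ ≤ ∑ a : Fin n → Fin N, ∑ w : Fin n → Fin N, μ (collisionBlock P a w ∩ goodSet P ν M n) :=
          (measure_iUnion_fintype_le μ _).trans
            (Finset.sum_le_sum fun _ _ => measure_iUnion_fintype_le μ _)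
      _ ≤ ∑ _a : Fin n → Fin N, M ^ 2 * ENNReal.ofReal (2 * δ) :=
          Finset.sum_le_sum fun a _ =>
            sum_measure_collisionBlock_inter_goodSet_le hμ hP hmaps hc hν hδ (hdist a) M
      _ = N ^ n * (M ^ 2 * ENNReal.ofReal (2 * δ)) := by
          simp only [Finset.sum_const, Finset.card_univ, Fintype.card_fun, Fintype.card_fin,
            nsmul_eq_mul, Nat.cast_pow]
  calc μ (collisionSet P)
      ≤ μ (collisionSet P ∩ goodSet P ν M n) + μ (collisionSet P \ goodSet P ν M n) :=
        measure_le_inter_add_sdiff _ _ _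
    _ ≤ _ := add_le_add hgood
        ((measure_mono (sdiff_subset_compl _ _)).trans (measure_compl_goodSet_le hμ hν M n))

lemma measure_collisionSet_eq_zero (hμ : IsUniformBernoulli N μ)
    (hP : IsNaturalProjection c b u v d P) (hmaps : ∀ i, Smap c b u v d i '' unitSq ⊆ unitSq)
    (hb : 0 < b) (hbN : b < 1 / N) (hc : 0 < c) (hac : μ.map (fun i => (P i).1) ≪ volume)
    (htrans : Transversality N c b u v d) : μ (collisionSet P) = 0 := by
  have := hμ.1
  set ν := μ.map fun i => (P i).1
  have hν : MeasurePreserving (fun i => (P i).1) μ ν := hP.measurable.fst.measurePreserving μ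
  obtain ⟨C, hC, hdist⟩ := hP.exists_dist_fst_le_of_mem_collisionBlock hmaps htrans
  have hlevel (M : ℝ≥0) : μ (collisionSet P) ≤ 2 * ν (linearGrowthSet ν M)ᶜ := by
    have hbound (n : ℕ) : μ (collisionSet P) ≤
        M ^ 2 * ENNReal.ofReal (2 * C * (N * b) ^ n) + 2 * ν (linearGrowthSet ν M)ᶜ := by
      have hcard : (N : ℝ≥0∞) ^ n * ENNReal.ofReal (2 * (C * b ^ n)) =
          ENNReal.ofReal (2 * C * (N * b) ^ n) := by
        rw [← ENNReal.ofReal_natCast, ← ENNReal.ofReal_pow (by positivity),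
          ← ENNReal.ofReal_mul (by positivity)]
        ring_nf
      rw [← hcard, mul_left_comm]
      exact measure_collisionSet_le hμ hP hmaps hc hν (by positivity) (hdist n) M
    have hNb : (N : ℝ) * b < 1 := by
      have hN : (0 : ℝ) < N := one_div_pos.1 (hb.trans hbN)
      rwa [lt_div_iff₀' hN] at hbN
    have hpow := ENNReal.tendsto_ofReal
      ((tendsto_pow_atTop_nhds_zero_of_lt_one (by positivity) hNb).const_mul (2 * C))
    have hlim := (ENNReal.Tendsto.const_mul (a := (M : ℝ≥0∞) ^ 2) hpow
      (Or.inr (by simp))).add_const (2 * ν (linearGrowthSet ν M)ᶜ)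
    simpa using ge_of_tendsto' hlim hbound
  have : IsProbabilityMeasure ν :=
    Measure.isProbabilityMeasure_map hP.measurable.fst.aemeasurable
  have hlim := ENNReal.Tendsto.const_mul (a := 2) (tendsto_measure_compl_linearGrowthSet hac)
    (Or.inr (by simp))
  simpa using ge_of_tendsto' hlim hlevel

end Collisions

theorem statement9_general {N : ℕ} {b c : ℝ} (hb0 : 0 < b) (hc0 : 0 < c) {u v d : Fin N → ℝ}
    (hmaps : ∀ i, Smap c b u v d i '' unitSq ⊆ unitSq)
    {Pi : (ℕ → Fin N) → ℝ × ℝ} (hPi : IsNaturalProjection c b u v d Pi)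
    {μ : Measure (ℕ → Fin N)} (hμ : IsUniformBernoulli N μ)
    (hbN : b < 1 / (N : ℝ)) (hac : μ.map (fun i => (Pi i).1) ≪ volume)
    (htrans : Transversality N c b u v d) :
    μ {i | ∃ j, j ≠ i ∧ Pi j = Pi i} = 0 :=
  measure_mono_null (hPi.setOf_not_injective_subset hc0.ne' hb0.ne') <|
    measure_iUnion_null fun k =>
      (hμ.measurePreserving_shift k).quasiMeasurePreserving.preimage_null
        (measure_collisionSet_eq_zero hμ hPi hmaps hb0 hbN hc0 hac htrans)

/-- under Assumption A, the natural projection `Π` is injective off a set of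
`μ`-measure zero. -/
theorem statement9 (N : ℕ) (hN : 2 ≤ N) (b c : ℝ)
    (hb0 : 0 < b) (hb1 : b < 1) (hc0 : 0 < c) (hc1 : c < 1)
    (u v d : Fin N → ℝ)
    (hmaps : ∀ i, Smap c b u v d i '' unitSq ⊆ unitSq)
    (Pi : (ℕ → Fin N) → ℝ × ℝ)
    (hPi : ∀ i, Tendsto (fun n => Sword c b u v d (prefixWord i n) 0) atTop (nhds (Pi i)))
    (μ : Measure (ℕ → Fin N)) (hμ : IsUniformBernoulli N μ)
    (νx : Measure ℝ) (hνx : νx = μ.map (fun i => (Pi i).1))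
    (hA1 : 1 / (N : ℝ) < c) (hA2 : b < 1 / (N : ℝ))
    (hA3 : ∃ q > (1 : ℝ), HasLqDensity νx q)
    (hA4 : Transversality N c b u v d) :
    μ {i | ∃ j, j ≠ i ∧ Pi j = Pi i} = 0 := by
  obtain ⟨q, -, φ, hφ, -⟩ := hA3
  exact statement9_general hb0 hc0 hmaps hPi hμ hA2
    (hνx ▸ hφ ▸ withDensity_absolutelyContinuous _ _) hA4

end
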